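/- (Duality relation) For every w ∈ ℌ⁰ one has ζ(w) = ζ(τ(w)), where τ is the anti-automorphism of ℌ exchanging x and y. -/

import Mathlib

/-!
The proof evaluates a connected sum. For words `u`, `v` put
`Z(u; v) = ∑_{m,n} c_u(m) c_v(n) · m! n! / (m + n)!`, where `c_w(m)` (`wordCoeff`) is the part of the
multiple sum attached to `w` with largest summation index `m`. The connector `m! n! / (m + n)!`
satisfies the telescoping identity `∑_{b > n} C(m,b)/b = C(m,n)/m` for `m > 0` (`tsum_connector`), and
reading it in both variables gives `Z(xu; v) = Z(u; yv)` and `Z(yu; v) = Z(u; xv)` (`connSum_x`,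
`connSum_y`). Moving all letters of an admissible word `w` across, one at a time, yields
`ζ(w) = Z(w; 𝟏) = Z(𝟏; τ(w)) = ζ(τ(w))` (`tsum_wordCoeff_dual`).

All sums are taken in `[0, ∞]`, so they may be reordered freely and no convergence has to be proved;
`mzv_eq` returns to real multiple zeta values.
-/

/- STATEMENT 4 (Duality relation): For every w ∈ ℌ⁰ one has ζ(w) = ζ(τ(w)),
where τ is the anti-automorphism of ℌ = ℚ⟨x,y⟩ exchanging x and y. -/

noncomputable section

/-- The two letters x, y of ℌ = ℚ⟨x,y⟩. -/
inductive XY : Type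
  | x : XY
  | y : XY

/-- Exchanging the letters x and y. -/
def swapXY : XY → XY
  | XY.x => XY.y
  | XY.y => XY.x

/-- A word in the letters x, y as an element of ℌ = ℚ⟨x,y⟩. -/
def ofW (w : List XY) : MonoidAlgebra ℚ (FreeMonoid XY) :=
  MonoidAlgebra.of ℚ (FreeMonoid XY) (FreeMonoid.ofList w)

/-- The word z_{k₁}⋯z_{k_r} ∈ ℌ, where z_k = x^{k-1}y. -/
def zWord (l : List ℕ+) : List XY :=
  (l.map fun k => List.replicate ((k : ℕ) - 1) XY.x ++ [XY.y]).flatten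

/-- The index list (k₁,…,k_r) is admissible: either empty or k₁ ≥ 2. -/
def Admissible (l : List ℕ+) : Prop := ∀ h : l ≠ [], 2 ≤ (l.head h : ℕ)

/-- The multiple zeta value ζ(k₁,…,k_r) = Σ_{m₁>⋯>m_r>0} 1/(m₁^{k₁}⋯m_r^{k_r}). -/
def mzv (l : List ℕ+) : ℝ :=
  ∑' m : {m : Fin l.length → ℕ //
      (∀ i j : Fin l.length, i < j → m j < m i) ∧ ∀ i, 0 < m i},
    ∏ i : Fin l.length, ((m.1 i : ℝ) ^ (l.get i : ℕ))⁻¹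

/-- ℌ⁰ = ℚ + xℌy, the span of 𝟏 and the words z_{k₁}⋯z_{k_r} with k₁ ≥ 2. -/
def H0 : Submodule ℚ (MonoidAlgebra ℚ (FreeMonoid XY)) :=
  Submodule.span ℚ {t | ∃ l : List ℕ+, Admissible l ∧ t = ofW (zWord l)}

open scoped ENNReal

/-- The coefficient attached to a word `w` and a top index `m`. For `w = z_{k₁}⋯z_{k_r}` it is the
sum of `1 / (m₁^{k₁}⋯m_r^{k_r})` over `m = m₁ > ⋯ > m_r > 0`; the empty word has top index `0`.
The letter `x` divides by `m`, the letter `y` also sums over all smaller top indices. -/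
def wordCoeff : List XY → ℕ → ℝ≥0∞
  | [], m => if m = 0 then 1 else 0
  | XY.x :: w, m => (m : ℝ≥0∞)⁻¹ * wordCoeff w m
  | XY.y :: w, m => (m : ℝ≥0∞)⁻¹ * ∑ k ∈ Finset.range m, wordCoeff w k

/-- The connector `m! n! / (m + n)!`. -/
def connector (m n : ℕ) : ℝ≥0∞ := ((m + n).choose m : ℝ≥0∞)⁻¹

/-- The connected sum of two words. -/
def connSum (u v : List XY) : ℝ≥0∞ :=
  ∑' m, ∑' n, wordCoeff u m * wordCoeff v n * connector m n

/-! ### The telescoping identity for the connector -/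

lemma connector_comm (m n : ℕ) : connector m n = connector n m := by
  unfold connector
  rw [add_comm n m, Nat.choose_symm_add]

lemma connector_zero_right (m : ℕ) : connector m 0 = 1 := by
  simp [connector]

lemma connector_step (m b : ℕ) (hm : 0 < m) :
    ((b + 1 : ℕ) : ℝ)⁻¹ * ((m + (b + 1)).choose m : ℝ)⁻¹ =
      (m : ℝ)⁻¹ * ((m + b).choose m : ℝ)⁻¹ - (m : ℝ)⁻¹ * ((m + (b + 1)).choose m : ℝ)⁻¹ := by
  have h : ((m + b + 1) * (m + b).choose m : ℝ) = (m + (b + 1)).choose m * (b + 1) := by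
    have := Nat.add_one_mul_choose_eq (m + b) b
    rw [Nat.choose_symm_add (a := m) (b := b), add_assoc,
      Nat.choose_symm_add (a := m) (b := b + 1)]
    exact_mod_cast this
  have h1 : ((m + b).choose m : ℝ) ≠ 0 := by
    exact_mod_cast (Nat.choose_pos (Nat.le_add_right m b)).ne'
  have h2 : ((m + (b + 1)).choose m : ℝ) ≠ 0 := by
    exact_mod_cast (Nat.choose_pos (Nat.le_add_right m (b + 1))).ne'
  have h3 : (m : ℝ) ≠ 0 := by exact_mod_cast hm.ne'
  have h4 : (b + 1 : ℝ) ≠ 0 := by positivity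
  push_cast
  field_simp
  linear_combination h

lemma tendsto_inv_choose (m : ℕ) (hm : 0 < m) :
    Filter.Tendsto (fun b : ℕ => ((m + b).choose m : ℝ)⁻¹) Filter.atTop (nhds 0) := by
  refine squeeze_zero (fun b => by positivity) (fun b => ?_)
    (tendsto_one_div_add_atTop_nhds_zero_nat (𝕜 := ℝ))
  rw [one_div]
  refine inv_anti₀ (by positivity) ?_
  have : b + 1 ≤ (m + b).choose m := by
    rw [Nat.choose_symm_add]
    calc b + 1 = (1 + b).choose b := by rw [add_comm 1 b]; simp
      _ ≤ (m + b).choose b := Nat.choose_le_choose b (by omega)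
  exact_mod_cast this

lemma tsum_connector_shift (m n : ℕ) (hm : 0 < m) :
    ∑' j : ℕ, ((j + (n + 1) : ℕ) : ℝ≥0∞)⁻¹ * connector m (j + (n + 1)) =
      (m : ℝ≥0∞)⁻¹ * connector m n := by
  have hs : HasSum (fun j : ℕ => ((j + (n + 1) : ℕ) : ℝ)⁻¹ *
      ((m + (j + (n + 1))).choose m : ℝ)⁻¹) ((m : ℝ)⁻¹ * ((m + n).choose m : ℝ)⁻¹) := by
    rw [hasSum_iff_tendsto_nat_of_nonneg (fun j => by positivity)]
    have hpart : ∀ N : ℕ, ∑ j ∈ Finset.range N, ((j + (n + 1) : ℕ) : ℝ)⁻¹ *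
        ((m + (j + (n + 1))).choose m : ℝ)⁻¹ =
        (m : ℝ)⁻¹ * ((m + n).choose m : ℝ)⁻¹ - (m : ℝ)⁻¹ * ((m + (N + n)).choose m : ℝ)⁻¹ := by
      intro N
      induction N with
      | zero => simp
      | succ N ih =>
        have := connector_step m (N + n) hm
        rw [Finset.sum_range_succ, ih, show N + (n + 1) = N + n + 1 by ring,
          show N + 1 + n = N + n + 1 by ring, this]
        ring
    simp_rw [hpart]
    have := ((tendsto_inv_choose m hm).comp (Filter.tendsto_add_atTop_nat n)).const_mul (m : ℝ)⁻¹
    simpa [Function.comp_def] using this.const_sub ((m : ℝ)⁻¹ * ((m + n).choose m : ℝ)⁻¹)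
  have key : ∀ a c : ℕ, 0 < a → 0 < c →
      ENNReal.ofReal ((a : ℝ)⁻¹ * (c : ℝ)⁻¹) = (a : ℝ≥0∞)⁻¹ * (c : ℝ≥0∞)⁻¹ := by
    intro a c ha hc
    rw [ENNReal.ofReal_mul (by positivity), ENNReal.ofReal_inv_of_pos (by positivity),
      ENNReal.ofReal_inv_of_pos (by positivity), ENNReal.ofReal_natCast, ENNReal.ofReal_natCast]
  have h := ENNReal.ofReal_tsum_of_nonneg (fun j => by positivity) hs.summable
  rw [hs.tsum_eq, key m _ hm (Nat.choose_pos (Nat.le_add_right _ _))] at h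
  unfold connector
  rw [h]
  refine tsum_congr fun j => (key _ _ (by omega) (Nat.choose_pos (Nat.le_add_right _ _))).symm

/-- The connector telescopes: `∑_{b > n} C(m,b)/b = C(m,n)/m` for `m > 0`. -/
lemma tsum_connector (m n : ℕ) (hm : 0 < m) :
    ∑' b : ℕ, (if n < b then (b : ℝ≥0∞)⁻¹ * connector m b else 0) =
      (m : ℝ≥0∞)⁻¹ * connector m n := by
  rw [← tsum_connector_shift m n hm,
    ← Summable.sum_add_tsum_nat_add' (k := n + 1) ENNReal.summable]
  rw [Finset.sum_eq_zero, zero_add]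
  · exact tsum_congr fun j => if_pos (by omega)
  · intro b hb
    exact if_neg (by have := Finset.mem_range.1 hb; omega)

/-! ### Transporting letters across the connected sum -/

/-- A word ending in `y` has no term with top index `0`; here `⊤ * 0 = 0` absorbs the junk value
`0⁻¹ = ⊤`. -/
lemma wordCoeff_zero (w : List XY) : wordCoeff (w ++ [XY.y]) 0 = 0 := by
  induction w with
  | nil => simp [wordCoeff]
  | cons a w ih => cases a <;> simp [wordCoeff, ih]

/-- Summation by parts for the letter `y`. -/
lemma tsum_wordCoeff_y (w : List XY) (f : ℕ → ℝ≥0∞) :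
    ∑' n, wordCoeff (XY.y :: w) n * f n =
      ∑' k, wordCoeff w k * ∑' n : ℕ, (if k < n then (n : ℝ≥0∞)⁻¹ * f n else 0) := by
  simp_rw [← ENNReal.tsum_mul_left]
  rw [ENNReal.tsum_comm]
  refine tsum_congr fun n => ?_
  rw [tsum_eq_sum (s := Finset.range n)]
  · rw [wordCoeff, Finset.mul_sum, Finset.sum_mul]
    refine Finset.sum_congr rfl fun k hk => ?_
    rw [if_pos (Finset.mem_range.1 hk)]
    ring
  · intro k hk
    rw [if_neg (by simpa using hk), mul_zero]

lemma connSum_comm (u v : List XY) : connSum u v = connSum v u := by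
  unfold connSum
  rw [ENNReal.tsum_comm]
  refine tsum_congr fun n => tsum_congr fun m => ?_
  rw [connector_comm, mul_comm (wordCoeff u m)]

/-- Moving an `x` from the left word turns it into a `y` on the right word. -/
lemma connSum_x (u v : List XY) (hu : wordCoeff u 0 = 0) :
    connSum (XY.x :: u) v = connSum u (XY.y :: v) := by
  unfold connSum
  refine tsum_congr fun m => ?_
  rcases Nat.eq_zero_or_pos m with rfl | hm
  · simp [wordCoeff, hu]
  simp_rw [mul_assoc, ENNReal.tsum_mul_left, tsum_wordCoeff_y, tsum_connector m _ hm, wordCoeff]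
  rw [mul_comm ((m : ℝ≥0∞)⁻¹), mul_assoc, ← ENNReal.tsum_mul_left]
  congr 1
  refine tsum_congr fun n => ?_
  ring

lemma connSum_y (u v : List XY) (hv : wordCoeff v 0 = 0) :
    connSum (XY.y :: u) v = connSum u (XY.x :: v) := by
  rw [connSum_comm, ← connSum_x v u hv, connSum_comm]

/-- The dual word `τ(w)`. -/
def dualWord (w : List XY) : List XY := (w.map swapXY).reverse

lemma dualWord_cons (a : XY) (w : List XY) : dualWord (a :: w) = dualWord w ++ [swapXY a] := by
  simp [dualWord]

/-- All letters of the left word are moved to the right. That both words end in `y` provides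
the vanishing at top index `0` that `connSum_x` and `connSum_y` require. -/
lemma connSum_transport (u v : List XY) :
    connSum (u ++ [XY.y]) (v ++ [XY.y]) = connSum [] (dualWord (u ++ [XY.y]) ++ v ++ [XY.y]) := by
  induction u generalizing v with
  | nil => simpa [dualWord, swapXY] using connSum_y [] (v ++ [XY.y]) (wordCoeff_zero v)
  | cons a u ih =>
    cases a with
    | x =>
      rw [List.cons_append, connSum_x _ _ (wordCoeff_zero u), ← List.cons_append, ih,
        dualWord_cons]
      simp [swapXY]
    | y =>
      rw [List.cons_append, connSum_y _ _ (wordCoeff_zero v), ← List.cons_append, ih,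
        dualWord_cons]
      simp [swapXY]

lemma connSum_nil_right (u : List XY) : connSum u [] = ∑' m, wordCoeff u m := by
  unfold connSum
  refine tsum_congr fun m => ?_
  rw [tsum_eq_single 0]
  · simp [wordCoeff, connector_zero_right]
  · intro n hn
    simp [wordCoeff, hn]

/-- Duality for words in `x ℌ y`, as an identity in `[0, ∞]`. -/
lemma tsum_wordCoeff_dual (u : List XY) :
    ∑' m, wordCoeff (XY.x :: (u ++ [XY.y])) m =
      ∑' m, wordCoeff (dualWord (XY.x :: (u ++ [XY.y]))) m := by
  rw [← connSum_nil_right, ← connSum_nil_right, connSum_x _ _ (wordCoeff_zero u),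
    connSum_comm _ [], dualWord_cons]
  simpa [swapXY] using connSum_transport u []

/-! ### Multiple zeta values as sums of word coefficients -/

/-- The summand of `ζ(k₁,…,k_r)` at an arbitrary tuple `m`, extended by zero. -/
def mzvTerm (l : List ℕ+) (m : Fin l.length → ℕ) : ℝ≥0∞ :=
  open Classical in
  if (∀ i j : Fin l.length, i < j → m j < m i) ∧ ∀ i, 0 < m i then
    ∏ i : Fin l.length, ((m i : ℝ≥0∞) ^ (l.get i : ℕ))⁻¹ else 0

lemma wordCoeff_replicate (j : ℕ) (w : List XY) (m : ℕ) :
    wordCoeff (List.replicate j XY.x ++ w) m = ((m : ℝ≥0∞)⁻¹) ^ j * wordCoeff w m := by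
  induction j with
  | zero => simp
  | succ j ih => rw [List.replicate_succ, List.cons_append, wordCoeff, ih]; ring

lemma zWord_cons (k : ℕ+) (l : List ℕ+) :
    zWord (k :: l) = List.replicate ((k : ℕ) - 1) XY.x ++ XY.y :: zWord l := by
  simp [zWord]

lemma wordCoeff_zWord_cons (k : ℕ+) (l : List ℕ+) (m : ℕ) :
    wordCoeff (zWord (k :: l)) m =
      ((m : ℝ≥0∞)⁻¹) ^ ((k : ℕ) - 1) * wordCoeff (XY.y :: zWord l) m := by
  rw [zWord_cons, wordCoeff_replicate]

/-- The tuple conditions for `(N, m)`: since `Finset.univ.sup m` is the largest entry of `m`, and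
`0` if `m` is empty, they say that `N` exceeds it and that `m` satisfies the conditions. -/
lemma cons_cond {n : ℕ} (N : ℕ) (m : Fin n → ℕ) :
    ((∀ i j : Fin (n + 1), i < j →
        (Fin.cons N m : Fin (n + 1) → ℕ) j < (Fin.cons N m : Fin (n + 1) → ℕ) i) ∧
      ∀ i, 0 < (Fin.cons N m : Fin (n + 1) → ℕ) i) ↔
    Finset.univ.sup m < N ∧ ((∀ i j : Fin n, i < j → m j < m i) ∧ ∀ i, 0 < m i) := by
  simp only [Fin.forall_fin_succ, Fin.cons_zero, Fin.cons_succ]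
  constructor
  · rintro ⟨⟨h1, h2⟩, h3, h4⟩
    refine ⟨(Finset.sup_lt_iff h3).2 fun i _ => h1.2 i (Fin.succ_pos i), ?_, h4⟩
    exact fun i j hij => (h2 i).2 j (Fin.succ_lt_succ_iff.2 hij)
  · rintro ⟨h1, h2, h3⟩
    have hN : 0 < N := by omega
    refine ⟨⟨⟨fun h => absurd h (lt_irrefl _), fun j _ =>
      (Finset.sup_lt_iff hN).1 h1 j (Finset.mem_univ j)⟩, fun i => ⟨fun h => ?_, fun j hij =>
      h2 i j (Fin.succ_lt_succ_iff.1 hij)⟩⟩, hN, h3⟩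
    exact absurd h (Fin.not_lt_zero _)

lemma mzvTerm_cons (k : ℕ+) (l : List ℕ+) (N : ℕ) (m : Fin l.length → ℕ) :
    mzvTerm (k :: l) (Fin.cons N m : Fin (l.length + 1) → ℕ) =
      if Finset.univ.sup m < N then ((N : ℝ≥0∞) ^ (k : ℕ))⁻¹ * mzvTerm l m else 0 := by
  classical
  unfold mzvTerm
  have h := cons_cond N m
  have hp : ∏ i : Fin (l.length + 1), (((Fin.cons N m : Fin (l.length + 1) → ℕ) i : ℝ≥0∞) ^
      ((k :: l).get i : ℕ))⁻¹ = ((N : ℝ≥0∞) ^ (k : ℕ))⁻¹ *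
        ∏ i : Fin l.length, ((m i : ℝ≥0∞) ^ (l.get i : ℕ))⁻¹ := by
    rw [Fin.prod_univ_succ]
    simp
  by_cases h1 : Finset.univ.sup m < N
  · by_cases h2 : (∀ i j : Fin l.length, i < j → m j < m i) ∧ ∀ i, 0 < m i
    · rw [if_pos h1, if_pos h2, ← hp]
      exact if_pos (h.2 ⟨h1, h2⟩)
    · rw [if_pos h1, if_neg h2, mul_zero]
      exact if_neg fun h' => h2 (h.1 h').2
  · rw [if_neg h1]
    exact if_neg fun h' => h1 (h.1 h').1

lemma sup_cons {n : ℕ} (N : ℕ) (m : Fin n → ℕ) (h : Finset.univ.sup m < N) :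
    Finset.univ.sup (Fin.cons N m : Fin (n + 1) → ℕ) = N := by
  apply le_antisymm
  · refine Finset.sup_le fun i _ => ?_
    refine Fin.cases ?_ (fun j => ?_) i
    · simp
    · simpa using (Finset.le_sup (f := m) (Finset.mem_univ j)).trans h.le
  · simpa using Finset.le_sup (f := (Fin.cons N m : Fin (n + 1) → ℕ)) (Finset.mem_univ 0)

/-- Weighting by a test function of the top index makes the induction on the index list work. -/
lemma tsum_mzvTerm (l : List ℕ+) (φ : ℕ → ℝ≥0∞) :
    ∑' m : Fin l.length → ℕ, mzvTerm l m * φ (Finset.univ.sup m) =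
      ∑' N, wordCoeff (zWord l) N * φ N := by
  induction l generalizing φ with
  | nil =>
    have e : ∀ m : Fin ([] : List ℕ+).length → ℕ,
        mzvTerm [] m * φ (Finset.univ.sup m) = φ 0 := by
      intro m
      have : Finset.univ.sup m = 0 := by
        apply Finset.sup_eq_bot_iff _ _ |>.2
        intro i
        exact i.elim0
      rw [this, mzvTerm, if_pos ⟨fun i => i.elim0, fun i => i.elim0⟩]
      simp
    have : Unique (Fin ([] : List ℕ+).length → ℕ) := inferInstanceAs (Unique (Fin 0 → ℕ))
    have hR : ∑' N, wordCoeff (zWord []) N * φ N = φ 0 := by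
      rw [tsum_eq_single 0]
      · simp [zWord, wordCoeff]
      · intro N hN
        simp [zWord, wordCoeff, hN]
    rw [tsum_congr e, hR, tsum_fintype]
    simp
  | cons k l ih =>
    have hk : (k : ℕ) - 1 + 1 = k := Nat.succ_pred_eq_of_pos k.pos
    calc ∑' m : Fin (l.length + 1) → ℕ, mzvTerm (k :: l) m * φ (Finset.univ.sup m)
        = ∑' p : ℕ × (Fin l.length → ℕ), mzvTerm (k :: l) (Fin.cons p.1 p.2 : _ → ℕ) *
            φ (Finset.univ.sup (Fin.cons p.1 p.2 : Fin (l.length + 1) → ℕ)) :=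
          ((Fin.consEquiv fun _ : Fin (l.length + 1) => ℕ).tsum_eq _).symm
      _ = ∑' m : Fin l.length → ℕ, ∑' N : ℕ, mzvTerm (k :: l) (Fin.cons N m : _ → ℕ) *
            φ (Finset.univ.sup (Fin.cons N m : Fin (l.length + 1) → ℕ)) := by
          rw [ENNReal.tsum_prod', ENNReal.tsum_comm]
      _ = ∑' m : Fin l.length → ℕ, mzvTerm l m * ∑' N : ℕ, (if Finset.univ.sup m < N then
            (N : ℝ≥0∞)⁻¹ * (((N : ℝ≥0∞)⁻¹) ^ ((k : ℕ) - 1) * φ N) else 0) := by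
          refine tsum_congr fun m => ?_
          rw [← ENNReal.tsum_mul_left]
          refine tsum_congr fun N => ?_
          rw [mzvTerm_cons]
          split_ifs with h
          · rw [sup_cons N m h, ENNReal.inv_pow]
            nth_rw 1 [← hk]
            ring
          · simp
      _ = ∑' N, wordCoeff (XY.y :: zWord l) N * (((N : ℝ≥0∞)⁻¹) ^ ((k : ℕ) - 1) * φ N) := by
          rw [tsum_wordCoeff_y]
          exact ih fun M => ∑' N : ℕ, (if M < N then
            (N : ℝ≥0∞)⁻¹ * (((N : ℝ≥0∞)⁻¹) ^ ((k : ℕ) - 1) * φ N) else 0)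
      _ = ∑' N, wordCoeff (zWord (k :: l)) N * φ N := by
          refine tsum_congr fun N => ?_
          rw [wordCoeff_zWord_cons]
          ring

/-- No convergence is needed: if the sum is infinite then both sides are `0` by convention. -/
lemma mzv_eq (l : List ℕ+) : mzv l = (∑' N, wordCoeff (zWord l) N).toReal := by
  classical
  have h := tsum_mzvTerm l fun _ => 1
  simp only [mul_one] at h
  have hsub := tsum_subtype {m : Fin l.length → ℕ |
      (∀ i j : Fin l.length, i < j → m j < m i) ∧ ∀ i, 0 < m i}
    fun m => ∏ i : Fin l.length, ((m i : ℝ≥0∞) ^ (l.get i : ℕ))⁻¹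
  have hterm : ∑' m : Fin l.length → ℕ, mzvTerm l m = ∑' m : {m : Fin l.length → ℕ //
      (∀ i j : Fin l.length, i < j → m j < m i) ∧ ∀ i, 0 < m i},
      ∏ i : Fin l.length, ((m.1 i : ℝ≥0∞) ^ (l.get i : ℕ))⁻¹ := by
    refine Eq.trans ?_ hsub.symm
    refine tsum_congr fun m => ?_
    simp only [mzvTerm, Set.indicator_apply, Set.mem_ofPred_eq]
  rw [← h, hterm, ENNReal.tsum_toReal_eq]
  · refine tsum_congr fun m => ?_
    simp [ENNReal.toReal_prod]
  · intro m
    refine ENNReal.prod_ne_top fun i _ => ENNReal.inv_ne_top.2 (pow_ne_zero _ ?_)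
    exact_mod_cast (m.2.2 i).ne'

/-! ### Words and index lists -/

/-- Every word ending in `y` is of the form `z_{k₁}⋯z_{k_r}` with `r ≥ 1`. -/
lemma exists_zWord (w : List XY) : ∃ k l, zWord (k :: l) = w ++ [XY.y] := by
  induction w with
  | nil => exact ⟨1, [], by simp [zWord]⟩
  | cons a w ih =>
    obtain ⟨k, l, h⟩ := ih
    cases a with
    | x =>
      refine ⟨k + 1, l, ?_⟩
      have hk : ((k + 1 : ℕ+) : ℕ) - 1 = (k - 1 : ℕ) + 1 := by
        have := k.pos
        rw [PNat.add_coe, PNat.one_coe]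
        omega
      rw [List.cons_append, ← h, zWord_cons, zWord_cons, hk, List.replicate_succ, List.cons_append]
    | y => exact ⟨1, k :: l, by rw [zWord_cons, h]; simp⟩

lemma zWord_cons_eq_append (k : ℕ+) (l : List ℕ+) : ∃ u, zWord (k :: l) = u ++ [XY.y] := by
  induction l generalizing k with
  | nil => exact ⟨List.replicate ((k : ℕ) - 1) XY.x, by simp [zWord]⟩
  | cons k' l ih =>
    obtain ⟨u, hu⟩ := ih k'
    exact ⟨List.replicate ((k : ℕ) - 1) XY.x ++ XY.y :: u, by rw [zWord_cons, hu]; simp⟩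

lemma zWord_admissible (k : ℕ+) (l : List ℕ+) (h : Admissible (k :: l)) :
    ∃ u, zWord (k :: l) = XY.x :: (u ++ [XY.y]) := by
  obtain ⟨u, hu⟩ := zWord_cons_eq_append k l
  have hk : 2 ≤ (k : ℕ) := h (List.cons_ne_nil _ _)
  obtain ⟨j, hj⟩ : ∃ j, (k : ℕ) - 1 = j + 1 := ⟨k - 2, by omega⟩
  cases u with
  | nil => simp [zWord_cons, hj, List.replicate_succ] at hu
  | cons a u =>
    refine ⟨u, ?_⟩
    have ha : a = XY.x := by
      simp [zWord_cons, hj, List.replicate_succ] at hu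
      exact hu.1.symm
    rw [hu, ha, List.cons_append]

lemma exists_admissible (u : List XY) :
    ∃ l, Admissible l ∧ zWord l = XY.x :: (u ++ [XY.y]) := by
  obtain ⟨k, l, h⟩ := exists_zWord (XY.x :: u)
  refine ⟨k :: l, fun _ => ?_, h⟩
  by_contra hk
  have hk1 : (k : ℕ) - 1 = 0 := by
    simp only [List.head_cons] at hk
    omega
  simp [zWord_cons, hk1] at h

theorem zeta_duality
    -- τ : the ℚ-linear anti-automorphism of ℌ with τ(x) = y, τ(y) = x, τ(𝟏) = 𝟏
    (tau : MonoidAlgebra ℚ (FreeMonoid XY) →ₗ[ℚ] MonoidAlgebra ℚ (FreeMonoid XY))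
    (htau : ∀ w : List XY, tau (ofW w) = ofW ((w.map swapXY).reverse))
    -- ζ : ℌ⁰ → ℝ, the ℚ-linear map with ζ(z_{k₁}⋯z_{k_r}) = ζ(k₁,…,k_r)
    (zeta : MonoidAlgebra ℚ (FreeMonoid XY) →ₗ[ℚ] ℝ)
    (hzeta : ∀ l : List ℕ+, Admissible l → zeta (ofW (zWord l)) = mzv l) :
    -- conclusion: ζ(w) = ζ(τ(w)) for all w ∈ ℌ⁰
    ∀ w ∈ H0, zeta w = zeta (tau w) := by
  intro w hw
  induction hw using Submodule.span_induction with
  | zero => simp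
  | add a b _ _ ha hb => simp only [map_add, ha, hb]
  | smul c a _ ha => simp only [map_smul, ha]
  | mem t ht =>
    obtain ⟨l, hl, rfl⟩ := ht
    cases l with
    | nil => simp [htau, zWord]
    | cons k l =>
      obtain ⟨u, hu⟩ := zWord_admissible k l hl
      -- the dual word again starts with `x` and ends with `y`
      have hd : dualWord (XY.x :: (u ++ [XY.y])) = XY.x :: (dualWord u ++ [XY.y]) := by
        simp [dualWord, swapXY]
      obtain ⟨l', hl', hw'⟩ := exists_admissible (dualWord u)
      have ht : tau (ofW (zWord (k :: l))) = ofW (zWord l') := by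
        rw [htau, hw', ← hd, hu, dualWord]
      rw [ht, hzeta _ hl, hzeta _ hl', mzv_eq, mzv_eq, hu, hw', tsum_wordCoeff_dual, hd]
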